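/- Let a₀ ∈ (0,1) be the minimal root of 4a(2−a)(1−a)²(a²−2a+2)² = 1 and let a ∈ [a₀, 1). Then sup{ δ ∈ (a−1, 0) : F(a−1, 1−a; 1; 1−x²) < F(a−1−δ, 1−a+δ; 1; 1−x³) for all x ∈ (0,1) } = (√6/3 − 1)(1−a). -/

import Mathlib

open Real Set Filter Topology

/-- The Gaussian hypergeometric function `F(a,b;c;x)`, defined as a power series
with Pochhammer (shifted factorial) coefficients. -/
noncomputable def hyp (a b c x : ℝ) : ℝ :=
  ∑' n : ℕ, ((∏ i ∈ Finset.range n, (a + i)) * (∏ i ∈ Finset.range n, (b + i)) /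
    ((∏ i ∈ Finset.range n, (c + i)) * (Nat.factorial n))) * x ^ n

/-! Put `p = 1 - a` and `q = 1 - a + δ`, and compare `F(-p,p;1;1-x²)` with `F(-q,q;1;1-x³)`. Both
equal `1` at `x = 1`, where their derivatives are `2p²` and `3q²`; so the inequality to the left of
`1` forces `3q² ≤ 2p²`, that is, `δ ≤ (√6/3 - 1)(1 - a)`. In the extremal case `3q² = 2p²` the
difference of the two functions is strictly monotone, because `F' = (ab/c) F(a+1,b+1;c+1)` turns the
sign of its derivative into `x F(1-q,1+q;2;1-x³) < F(1-p,1+p;2;1-x²)`. For zero-balanced functions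
`F(a,b;a+b;x)` with `ab ≤ 1` the coefficients `Aₙ` have `n Aₙ` increasing and `(n + 1) Aₙ`
decreasing, which gives logarithmic bounds sharp enough to prove this. -/

section Coefficient

lemma ascPochhammer_eval_eq_prod_range {S : Type*} [CommSemiring S] (n : ℕ) (s : S) :
    (ascPochhammer S n).eval s = ∏ i ∈ Finset.range n, (s + i) := by
  induction n with
  | zero => simp
  | succ n ih => rw [ascPochhammer_succ_eval, ih, Finset.prod_range_succ]

variable {𝕂 : Type*} [Field 𝕂] (a b c : 𝕂) (n : ℕ)

lemma ordinaryHypergeometricCoefficient_zero :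
    ordinaryHypergeometricCoefficient a b c 0 = 1 := by
  simp [ordinaryHypergeometricCoefficient]

lemma ordinaryHypergeometricCoefficient_one :
    ordinaryHypergeometricCoefficient a b c 1 = a * b / c := by
  simp [ordinaryHypergeometricCoefficient, div_eq_mul_inv]

lemma ordinaryHypergeometricCoefficient_succ :
    ordinaryHypergeometricCoefficient a b c (n + 1) =
      ordinaryHypergeometricCoefficient a b c n * ((a + n) * (b + n) / ((c + n) * (n + 1))) := by
  simp only [ordinaryHypergeometricCoefficient, ascPochhammer_succ_eval, Nat.factorial_succ,
    Nat.cast_mul, Nat.cast_succ, mul_inv, div_eq_mul_inv]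
  ring

lemma succ_mul_ordinaryHypergeometricCoefficient_succ [CharZero 𝕂] :
    (n + 1) * ordinaryHypergeometricCoefficient a b c (n + 1) =
      a * b / c * ordinaryHypergeometricCoefficient (a + 1) (b + 1) (c + 1) n := by
  have heval (s : 𝕂) : (ascPochhammer 𝕂 (n + 1)).eval s = s * (ascPochhammer 𝕂 n).eval (s + 1) := by
    simp [ascPochhammer_succ_left]
  simp only [ordinaryHypergeometricCoefficient, heval, Nat.factorial_succ, Nat.cast_mul,
    Nat.cast_succ, mul_inv, div_eq_mul_inv]
  have : (n : 𝕂) + 1 ≠ 0 := n.cast_add_one_ne_zero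
  field

end Coefficient

section Analytic

variable {𝕂 : Type*} [RCLike 𝕂] (a b c : 𝕂) {x : 𝕂}

lemma one_le_ordinaryHypergeometricSeries_radius :
    1 ≤ (ordinaryHypergeometricSeries 𝕂 a b c).radius := by
  by_cases h : ∃ k : ℕ, (k : 𝕂) = -a ∨ (k : 𝕂) = -b ∨ (k : 𝕂) = -c
  · obtain ⟨k, hk⟩ := h
    rw [FormalMultilinearSeries.radius_eq_top_of_forall_image_add_eq_zero _ (k + 1) fun n =>
      ordinaryHypergeometricSeries_eq_zero_of_neg_nat a b c hk (by lia)]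
    exact le_top
  · push Not at h
    exact (ordinaryHypergeometricSeries_radius_eq_one 𝕂 a b c h).ge

lemma hasFPowerSeriesOnBall_ordinaryHypergeometric :
    HasFPowerSeriesOnBall (₂F₁ a b c) (ordinaryHypergeometricSeries 𝕂 a b c) 0 1 :=
  have h := one_le_ordinaryHypergeometricSeries_radius a b c
  ((ordinaryHypergeometricSeries 𝕂 a b c).hasFPowerSeriesOnBall
    (zero_lt_one.trans_le h)).mono zero_lt_one h

lemma mem_eball_zero_one {E : Type*} [SeminormedAddCommGroup E] {x : E} :
    x ∈ Metric.eball 0 1 ↔ ‖x‖ < 1 := by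
  rw [← ENNReal.coe_one, Metric.eball_coe, mem_ball_zero_iff, NNReal.coe_one]

lemma hasSum_ordinaryHypergeometric (hx : ‖x‖ < 1) :
    HasSum (fun n => ordinaryHypergeometricCoefficient a b c n * x ^ n) (₂F₁ a b c x) := by
  have hmem : x ∈ Metric.eball (0 : 𝕂) 1 := mem_eball_zero_one.2 hx
  simpa only [ordinaryHypergeometricSeries_apply_eq, smul_eq_mul, zero_add] using
    (hasFPowerSeriesOnBall_ordinaryHypergeometric a b c).hasSum hmem

lemma hasDerivAt_ordinaryHypergeometric (hx : ‖x‖ < 1) :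
    HasDerivAt (₂F₁ a b c) (a * b / c * ₂F₁ (a + 1) (b + 1) (c + 1) x) x := by
  have hmem : x ∈ Metric.eball (0 : 𝕂) 1 := mem_eball_zero_one.2 hx
  have hF := hasFPowerSeriesOnBall_ordinaryHypergeometric a b c
  have hcoeff (n : ℕ) : (ordinaryHypergeometricSeries 𝕂 a b c).derivSeries n (fun _ => x) 1 =
      a * b / c * (ordinaryHypergeometricCoefficient (a + 1) (b + 1) (c + 1) n * x ^ n) := by
    rw [FormalMultilinearSeries.apply_eq_pow_smul_coeff, smul_apply,
      FormalMultilinearSeries.derivSeries_coeff_one, ordinaryHypergeometricSeries,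
      FormalMultilinearSeries.coeff_ofScalars, ← mul_assoc,
      ← succ_mul_ordinaryHypergeometricCoefficient_succ, nsmul_eq_mul, smul_eq_mul]
    push_cast
    ring
  have hsum : HasSum (fun n => (ordinaryHypergeometricSeries 𝕂 a b c).derivSeries n (fun _ => x) 1)
      (fderiv 𝕂 (₂F₁ a b c) x 1) := by
    simpa using (hF.fderiv.hasSum hmem).mapL (ContinuousLinearMap.apply 𝕂 𝕂 (1 : 𝕂))
  have hderiv : HasDerivAt (₂F₁ a b c) (fderiv 𝕂 (₂F₁ a b c) x 1) x :=
    (hF.analyticAt_of_mem hmem).differentiableAt.hasFDerivAt.hasDerivAt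
  simp only [hcoeff] at hsum
  rwa [hsum.unique ((hasSum_ordinaryHypergeometric (a + 1) (b + 1) (c + 1) hx).mul_left _)]
    at hderiv

end Analytic

section ZeroBalanced

variable {a b c x : ℝ}

lemma ordinaryHypergeometricCoefficient_nonneg (ha : 0 ≤ a) (hb : 0 ≤ b) (hc : 0 ≤ c) (n : ℕ) :
    0 ≤ ordinaryHypergeometricCoefficient a b c n := by
  induction n with
  | zero => simp
  | succ n ih =>
    rw [ordinaryHypergeometricCoefficient_succ]
    positivity

lemma monotone_natCast_mul_ordinaryHypergeometricCoefficient (ha : 0 ≤ a) (hb : 0 ≤ b) :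
    Monotone fun n : ℕ => n * ordinaryHypergeometricCoefficient a b (a + b) n := by
  refine monotone_nat_of_le_succ fun n => ?_
  have hratio : (n : ℝ) ≤ (n + 1) * ((a + n) * (b + n) / ((a + b + n) * (n + 1))) := by
    rcases n.eq_zero_or_pos with rfl | hn
    · simp only [Nat.cast_zero]
      positivity
    · rw [← mul_div_assoc, le_div_iff₀ (by positivity)]
      have : 0 ≤ (n + 1) * (a * b) := by positivity
      linarith
  have hnonneg := ordinaryHypergeometricCoefficient_nonneg ha hb (add_nonneg ha hb) n
  rw [ordinaryHypergeometricCoefficient_succ, Nat.cast_succ,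
    mul_left_comm ((n : ℝ) + 1), mul_comm (n : ℝ) (ordinaryHypergeometricCoefficient _ _ _ _)]
  exact mul_le_mul_of_nonneg_left hratio hnonneg

lemma two_mul_mul_le_add (ha : 0 ≤ a) (hb : 0 ≤ b) (hab : a * b ≤ 1) : 2 * (a * b) ≤ a + b := by
  refine le_of_sq_le_sq ?_ (add_nonneg ha hb)
  calc (2 * (a * b)) ^ 2 = 4 * (a * b) * (a * b) := by ring
    _ ≤ 4 * (a * b) := mul_le_of_le_one_right (by positivity) hab
    _ ≤ (a + b) ^ 2 := by linarith [sq_nonneg (a - b)]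

lemma antitone_succ_mul_ordinaryHypergeometricCoefficient (ha : 0 ≤ a) (hb : 0 ≤ b)
    (hab : a * b ≤ 1) :
    Antitone fun n : ℕ => (n + 1) * ordinaryHypergeometricCoefficient a b (a + b) n := by
  refine antitone_nat_of_succ_le fun n => ?_
  have hratio : ((n : ℝ) + 2) * ((a + n) * (b + n) / ((a + b + n) * (n + 1))) ≤ n + 1 := by
    rw [← mul_div_assoc]
    refine div_le_of_le_mul₀ (by positivity) (by positivity) ?_
    have : 0 ≤ n * (1 - a * b) := mul_nonneg n.cast_nonneg (sub_nonneg.2 hab)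
    linarith [two_mul_mul_le_add ha hb hab]
  have hnonneg := ordinaryHypergeometricCoefficient_nonneg ha hb (add_nonneg ha hb) n
  rw [ordinaryHypergeometricCoefficient_succ, Nat.cast_succ, add_assoc, one_add_one_eq_two,
    mul_left_comm, mul_comm ((n : ℝ) + 1) (ordinaryHypergeometricCoefficient _ _ _ _)]
  exact mul_le_mul_of_nonneg_left hratio hnonneg

lemma hasSum_succ_ordinaryHypergeometric (hx : |x| < 1) :
    HasSum (fun n => ordinaryHypergeometricCoefficient a b c (n + 1) * x ^ (n + 1))
      (₂F₁ a b c x - 1) := by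
  simpa [ordinaryHypergeometricCoefficient_zero] using
    (hasSum_nat_add_iff' 1).2 (hasSum_ordinaryHypergeometric a b c hx)

theorem one_add_mul_neg_log_le_ordinaryHypergeometric (ha : 0 ≤ a) (hb : 0 ≤ b) (hx0 : 0 ≤ x)
    (hx1 : x < 1) : 1 + a * b / (a + b) * -log (1 - x) ≤ ₂F₁ a b (a + b) x := by
  have hx : |x| < 1 := by rwa [abs_of_nonneg hx0]
  rw [← le_sub_iff_add_le']
  refine hasSum_le (fun n => ?_) ((hasSum_pow_div_log_of_abs_lt_one hx).mul_left _)
    (hasSum_succ_ordinaryHypergeometric hx)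
  have hcoeff : a * b / (a + b) / (n + 1) ≤
      ordinaryHypergeometricCoefficient a b (a + b) (n + 1) := by
    rw [div_le_iff₀' (by positivity), ← ordinaryHypergeometricCoefficient_one]
    simpa only [Nat.cast_zero, zero_add, one_mul, Nat.cast_succ] using
      monotone_natCast_mul_ordinaryHypergeometricCoefficient ha hb (Nat.le_add_left 1 n)
  rw [← mul_div_assoc, mul_div_right_comm]
  exact mul_le_mul_of_nonneg_right hcoeff (pow_nonneg hx0 _)

lemma hasSum_pow_div_add_two (hx0 : x ≠ 0) (hx : |x| < 1) :
    HasSum (fun n : ℕ => x ^ (n + 1) / (n + 2)) (-log (1 - x) / x - 1) := by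
  have hterm (n : ℕ) : x ^ (n + 1 + 1) / ((n + 1 : ℕ) + 1) / x = x ^ (n + 1) / (n + 2) := by
    rw [Nat.cast_succ, add_assoc (n : ℝ), one_add_one_eq_two, pow_succ x (n + 1), div_right_comm,
      mul_div_cancel_right₀ _ hx0]
  have h := ((hasSum_nat_add_iff' 1).2 (hasSum_pow_div_log_of_abs_lt_one hx)).div_const x
  simp only [hterm] at h
  simpa [sub_div, hx0] using h

theorem ordinaryHypergeometric_le_one_add_mul (ha : 0 ≤ a) (hb : 0 ≤ b) (hab : a * b ≤ 1)
    (hx0 : 0 < x) (hx1 : x < 1) :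
    ₂F₁ a b (a + b) x ≤ 1 + 2 * (a * b / (a + b)) * (-log (1 - x) / x - 1) := by
  have hx : |x| < 1 := by rwa [abs_of_pos hx0]
  rw [← sub_le_iff_le_add']
  refine hasSum_le (fun n => ?_) (hasSum_succ_ordinaryHypergeometric hx)
    ((hasSum_pow_div_add_two hx0.ne' hx).mul_left _)
  have hcoeff : ordinaryHypergeometricCoefficient a b (a + b) (n + 1) ≤
      2 * (a * b / (a + b)) / (n + 2) := by
    have h := antitone_succ_mul_ordinaryHypergeometricCoefficient ha hb hab
      (Nat.le_add_left 1 n)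
    simp only [ordinaryHypergeometricCoefficient_one, Nat.cast_succ, Nat.cast_zero, zero_add,
      add_assoc, one_add_one_eq_two] at h
    rwa [le_div_iff₀' (by positivity)]
  rw [← mul_div_assoc, mul_div_right_comm]
  exact mul_le_mul_of_nonneg_right hcoeff (pow_nonneg hx0.le _)

end ZeroBalanced

section Comparison

variable {p q x : ℝ}

lemma one_add_mul_neg_log_le_ordinaryHypergeometric_one_sub_sq (hp : p ^ 2 ≤ 1) (hx0 : 0 < x)
    (hx1 : x ≤ 1) : 1 + (1 - p ^ 2) * -log x ≤ ₂F₁ (1 - p) (1 + p) 2 (1 - x ^ 2) := by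
  obtain ⟨hneg, hpos⟩ := abs_le.1 ((sq_le_one_iff_abs_le_one p).1 hp)
  have h := one_add_mul_neg_log_le_ordinaryHypergeometric (a := 1 - p) (b := 1 + p)
    (x := 1 - x ^ 2) (by linarith) (by linarith) (sub_nonneg.2 (pow_le_one₀ hx0.le hx1))
    (sub_lt_self 1 (by positivity))
  rw [sub_sub_cancel, log_pow, show 1 - p + (1 + p) = 2 by ring] at h
  convert h using 1
  push_cast
  ring

lemma ordinaryHypergeometric_one_sub_cube_le (hq : q ^ 2 ≤ 1) (hx0 : 0 < x) (hx1 : x < 1) :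
    ₂F₁ (1 - q) (1 + q) 2 (1 - x ^ 3) ≤ 1 + (1 - q ^ 2) * (3 * (-log x / (1 - x ^ 3)) - 1) := by
  obtain ⟨hneg, hpos⟩ := abs_le.1 ((sq_le_one_iff_abs_le_one q).1 hq)
  have h := ordinaryHypergeometric_le_one_add_mul (a := 1 - q) (b := 1 + q)
    (x := 1 - x ^ 3) (by linarith) (by linarith) (by linarith [sq_nonneg q])
    (sub_pos.2 (pow_lt_one₀ hx0.le hx1 three_ne_zero)) (sub_lt_self 1 (by positivity))
  rw [sub_sub_cancel, log_pow, show 1 - q + (1 + q) = 2 by ring] at h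
  convert h using 1
  push_cast
  ring

lemma mul_neg_log_div_one_sub_cube_le (hx0 : 0 < x) (hx1 : x < 1) :
    x * (-log x / (1 - x ^ 3)) ≤ 1 / (1 + x + x ^ 2) := by
  have hcube : 0 < 1 - x ^ 3 := sub_pos.2 (pow_lt_one₀ hx0.le hx1 three_ne_zero)
  rw [← mul_div_assoc, div_le_div_iff₀ hcube (by positivity)]
  calc x * -log x * (1 + x + x ^ 2) ≤ (1 - x) * (1 + x + x ^ 2) := by
        gcongr
        linarith [self_sub_one_le_mul_log hx0.le]
    _ = 1 * (1 - x ^ 3) := by ring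

lemma three_mul_mul_neg_log_div_lt (hx0 : 0 < x) (hx1 : x < 1) :
    3 * (x * (-log x / (1 - x ^ 3))) < 1 - log x := by
  have hcube : 0 < 1 - x ^ 3 := sub_pos.2 (pow_lt_one₀ hx0.le hx1 three_ne_zero)
  have hle := mul_neg_log_div_one_sub_cube_le hx0 hx1
  rw [le_div_iff₀ (by positivity)] at hle
  set m := -log x / (1 - x ^ 3)
  have hlog : -log x = m * (1 - x ^ 3) := (div_mul_cancel₀ _ hcube.ne').symm
  have hgap : 0 < m * (1 - x) ^ 2 := mul_pos (div_pos (neg_pos.2 (log_neg hx0 hx1)) hcube)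
    (pow_pos (sub_pos.2 hx1) 2)
  linarith

lemma mul_two_thirds_add_neg_log_div_lt_one (hx0 : 0 < x) (hx1 : x < 1) :
    x * (2 / 3 + -log x / (1 - x ^ 3)) < 1 := by
  have hrat : 2 / 3 * x + 1 / (1 + x + x ^ 2) < 1 := by
    have : 0 < x * (1 - x) * (1 + 2 * x) := by
      have := sub_pos.2 hx1
      positivity
    rw [← lt_sub_iff_add_lt', div_lt_iff₀ (by positivity)]
    linarith
  linarith [mul_neg_log_div_one_sub_cube_le hx0 hx1]

theorem mul_ordinaryHypergeometric_one_sub_cube_lt (hp : p ^ 2 ≤ 1) (hpq : 3 * q ^ 2 = 2 * p ^ 2)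
    (hx0 : 0 < x) (hx1 : x < 1) :
    x * ₂F₁ (1 - q) (1 + q) 2 (1 - x ^ 3) < ₂F₁ (1 - p) (1 + p) 2 (1 - x ^ 2) := by
  have hq2 : q ^ 2 = 2 / 3 * p ^ 2 := by linarith
  have hq : q ^ 2 ≤ 1 := by linarith [sq_nonneg p]
  have hzero := three_mul_mul_neg_log_div_lt hx0 hx1
  have hone := mul_two_thirds_add_neg_log_div_lt_one hx0 hx1
  set m := -log x / (1 - x ^ 3)
  -- both logarithmic bounds are affine in `p ^ 2`, so only `p ^ 2 = 0` and `p ^ 2 = 1` matter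
  calc x * ₂F₁ (1 - q) (1 + q) 2 (1 - x ^ 3)
      ≤ x * (1 + (1 - q ^ 2) * (3 * m - 1)) :=
        mul_le_mul_of_nonneg_left (ordinaryHypergeometric_one_sub_cube_le hq hx0 hx1) hx0.le
    _ = (1 - p ^ 2) * (3 * (x * m)) + p ^ 2 * (x * (2 / 3 + m)) := by
        rw [hq2]
        ring
    _ < (1 - p ^ 2) * (1 - log x) + p ^ 2 * 1 := by
        rcases hp.lt_or_eq with hlt | heq
        · exact add_lt_add_of_lt_of_le (mul_lt_mul_of_pos_left hzero (sub_pos.2 hlt))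
            (mul_le_mul_of_nonneg_left hone.le (sq_nonneg p))
        · simpa [heq] using hone
    _ = 1 + (1 - p ^ 2) * -log x := by ring
    _ ≤ ₂F₁ (1 - p) (1 + p) 2 (1 - x ^ 2) :=
        one_add_mul_neg_log_le_ordinaryHypergeometric_one_sub_sq hp hx0 hx1.le

lemma hasDerivAt_ordinaryHypergeometric_one_sub_pow (q : ℝ) (k : ℕ) (hx0 : 0 < x) (hx1 : x ≤ 1) :
    HasDerivAt (fun y => ₂F₁ (-q) q 1 (1 - y ^ k))
      (q ^ 2 * ₂F₁ (1 - q) (1 + q) 2 (1 - x ^ k) * (k * x ^ (k - 1))) x := by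
  have hnorm : ‖1 - x ^ k‖ < 1 := by
    rw [norm_of_nonneg (sub_nonneg.2 (pow_le_one₀ hx0.le hx1))]
    exact sub_lt_self 1 (pow_pos hx0 k)
  have h := (hasDerivAt_ordinaryHypergeometric (-q) q 1 hnorm).comp x
    ((hasDerivAt_pow k x).const_sub 1)
  rw [neg_add_eq_sub, add_comm q 1, one_add_one_eq_two] at h
  exact h.congr_deriv (by ring)

lemma hasDerivAt_ordinaryHypergeometric_cube_sub_sq (p q : ℝ) (hx0 : 0 < x) (hx1 : x ≤ 1) :
    HasDerivAt (fun y => ₂F₁ (-q) q 1 (1 - y ^ 3) - ₂F₁ (-p) p 1 (1 - y ^ 2))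
      (3 * q ^ 2 * x ^ 2 * ₂F₁ (1 - q) (1 + q) 2 (1 - x ^ 3) -
        2 * p ^ 2 * x * ₂F₁ (1 - p) (1 + p) 2 (1 - x ^ 2)) x := by
  refine ((hasDerivAt_ordinaryHypergeometric_one_sub_pow q 3 hx0 hx1).sub
    (hasDerivAt_ordinaryHypergeometric_one_sub_pow p 2 hx0 hx1)).congr_deriv ?_
  push_cast
  ring

theorem ordinaryHypergeometric_one_sub_sq_lt_one_sub_cube (hp0 : p ≠ 0) (hp : p ^ 2 ≤ 1)
    (hpq : 3 * q ^ 2 = 2 * p ^ 2) (hx0 : 0 < x) (hx1 : x < 1) :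
    ₂F₁ (-p) p 1 (1 - x ^ 2) < ₂F₁ (-q) q 1 (1 - x ^ 3) := by
  have hderiv {y : ℝ} := hasDerivAt_ordinaryHypergeometric_cube_sub_sq (x := y) p q
  have hanti : StrictAntiOn
      (fun y => ₂F₁ (-q) q 1 (1 - y ^ 3) - ₂F₁ (-p) p 1 (1 - y ^ 2)) (Icc x 1) := by
    refine strictAntiOn_of_deriv_neg (convex_Icc x 1) (fun y hy =>
      (hderiv (hx0.trans_le hy.1) hy.2).continuousAt.continuousWithinAt) fun y hy => ?_
    rw [interior_Icc] at hy
    have hy0 : 0 < y := hx0.trans hy.1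
    have hlt := mul_lt_mul_of_pos_left (mul_ordinaryHypergeometric_one_sub_cube_lt hp hpq hy0 hy.2)
      (by positivity : 0 < 2 * p ^ 2 * y)
    rw [(hderiv hy0 hy.2.le).deriv, hpq]
    linarith
  have h := hanti ⟨le_rfl, hx1.le⟩ ⟨hx1.le, le_rfl⟩ hx1
  simpa using h

theorem three_mul_sq_le_two_mul_sq_of_ordinaryHypergeometric_lt
    (h : ∀ x ∈ Ioo (0 : ℝ) 1, ₂F₁ (-p) p 1 (1 - x ^ 2) < ₂F₁ (-q) q 1 (1 - x ^ 3)) :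
    3 * q ^ 2 ≤ 2 * p ^ 2 := by
  have hslope := (hasDerivAt_iff_tendsto_slope.1
    (hasDerivAt_ordinaryHypergeometric_cube_sub_sq p q one_pos le_rfl)).mono_left
    (nhdsLT_le_nhdsNE (1 : ℝ))
  have hle := le_of_tendsto hslope (b := 0) <| by
    filter_upwards [Ioo_mem_nhdsLT (zero_lt_one' ℝ)] with y hy
    rw [slope_def_field]
    refine div_nonpos_of_nonneg_of_nonpos ?_ (sub_nonpos.2 hy.2.le)
    simpa using (h y hy).le
  simpa using hle

end Comparison

lemma hyp_eq_ordinaryHypergeometric (a b c x : ℝ) : hyp a b c x = ₂F₁ a b c x := by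
  simp only [hyp, ordinaryHypergeometric_eq_tsum, ascPochhammer_eval_eq_prod_range, smul_eq_mul]
  refine tsum_congr fun n => ?_
  rw [div_eq_mul_inv, mul_inv]
  ring

lemma three_mul_sq_le_two_mul_sq_iff {p q : ℝ} (hp : 0 ≤ p) (hq : 0 ≤ q) :
    3 * q ^ 2 ≤ 2 * p ^ 2 ↔ q ≤ √6 / 3 * p := by
  have hsq : (√6 / 3 * p) ^ 2 = 2 / 3 * p ^ 2 := by
    rw [mul_pow, div_pow, sq_sqrt (by norm_num)]
    ring
  rw [← pow_le_pow_iff_left₀ hq (by positivity) two_ne_zero, hsq]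
  constructor <;> intro h <;> linarith

theorem stmt19_general {a : ℝ} (ha : a ∈ Ico (0 : ℝ) 1) :
    IsGreatest {δ : ℝ | δ ∈ Ioo (a - 1) 0 ∧ ∀ x ∈ Ioo (0 : ℝ) 1,
        hyp (a - 1) (1 - a) 1 (1 - x ^ 2) < hyp (a - 1 - δ) (1 - a + δ) 1 (1 - x ^ 3)}
      ((√6 / 3 - 1) * (1 - a)) := by
  have hp : 0 < 1 - a := sub_pos.2 ha.2
  have hsqrt : √6 < 3 := (sqrt_lt' three_pos).2 (by norm_num)
  have hhyp (δ x : ℝ) :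
      hyp (a - 1 - δ) (1 - a + δ) 1 x = ₂F₁ (-(1 - a + δ)) (1 - a + δ) 1 x := by
    rw [hyp_eq_ordinaryHypergeometric, neg_add, neg_sub, sub_eq_add_neg (a - 1)]
  have hhyp₀ (x : ℝ) : hyp (a - 1) (1 - a) 1 x = ₂F₁ (-(1 - a)) (1 - a) 1 x := by
    rw [hyp_eq_ordinaryHypergeometric, neg_sub]
  have hmax : 1 - a + (√6 / 3 - 1) * (1 - a) = √6 / 3 * (1 - a) := by ring
  simp only [hhyp, hhyp₀]
  refine ⟨⟨⟨?_, ?_⟩, fun x hx => ?_⟩, fun δ ⟨⟨hδ, _⟩, hlt⟩ => ?_⟩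
  · have : 0 < √6 / 3 * (1 - a) := by positivity
    linarith
  · exact mul_neg_of_neg_of_pos (by linarith) hp
  · rw [hmax]
    refine ordinaryHypergeometric_one_sub_sq_lt_one_sub_cube hp.ne'
      (pow_le_one₀ hp.le (sub_le_self 1 ha.1)) ?_ hx.1 hx.2
    rw [mul_pow, div_pow, sq_sqrt (by norm_num)]
    ring
  · have h := three_mul_sq_le_two_mul_sq_of_ordinaryHypergeometric_lt hlt
    rw [three_mul_sq_le_two_mul_sq_iff hp.le (by linarith), ← hmax] at h
    exact le_of_add_le_add_left h

theorem stmt19 (a₀ a : ℝ)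
    (ha₀ : a₀ ∈ Ioo (0:ℝ) 1)
    (hroot : 4 * a₀ * (2 - a₀) * (1 - a₀) ^ 2 * (a₀ ^ 2 - 2 * a₀ + 2) ^ 2 = 1)
    (hmin : ∀ x ∈ Ioo (0:ℝ) 1,
      4 * x * (2 - x) * (1 - x) ^ 2 * (x ^ 2 - 2 * x + 2) ^ 2 = 1 → a₀ ≤ x)
    (ha : a ∈ Ico a₀ 1) :
    sSup {δ : ℝ | δ ∈ Ioo (a - 1) 0 ∧ ∀ x ∈ Ioo (0:ℝ) 1,
        hyp (a - 1) (1 - a) 1 (1 - x ^ 2) < hyp (a - 1 - δ) (1 - a + δ) 1 (1 - x ^ 3)}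
      = (Real.sqrt 6 / 3 - 1) * (1 - a) :=
  (stmt19_general ⟨ha₀.1.le.trans ha.1, ha.2⟩).csSup_eq
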